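/- Let n, t ∈ ℕ and let C ⊆ {0,1}^n be a code with d_id(X,Y) ≥ 2t + 2 for all distinct X, Y ∈ C. Then there exists a decoding function Dec : {0,1}^* → {0,1}^n × Bool such that for every sent codeword X ∈ C and every received binary word Y: (C1) if Y is obtained from X by 0-deletions only and Dec(Y) = (X', true) then X' = X; (C2) if Y is obtained from X by 0-insertions only and Dec(Y) = (X', true) then X' = X; (C3) if d_id(X,Y) ≤ t + 1 and Dec(Y) = (X', true) then X' = X; and (C4) if d_id(X,Y) ≤ t then the second component of Dec(Y) is true. (That is, C is a t-Sy0EC/(t+1)-Sy0ED/AU0ED code.) -/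

import Mathlib

/-!
The decoder is bounded-distance decoding: on input `Y`, output a codeword within distance `t`
of `Y` together with `true` if there is one, and the flag `false` otherwise; (C4) is immediate.
If `Dec Y = (X', true)` and `d_id(X, Y) ≤ t + 1`, the triangle inequality gives
`d_id(X, X') ≤ 2t + 1`, so `X = X'`, which is (C3).

For (C1) and (C2) all codewords have the same length. If `Y` comes from `X` by deletions only,
or by insertions only, then `X` and `Y` are joined by a chain of exactly `||X| - |Y||` steps
(`ZeroDelsOnly.exists_chain`). Each step changes the length by one (`ZeroChain.length_le`), so
`||X| - |Y|| = ||X'| - |Y|| ≤ d_id(X', Y) ≤ t`, and (C3) applies.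
-/

/-- `Y` is obtained from `X` by deleting one occurrence of the symbol `0`
(represented by `false`). -/
def ZeroDel (X Y : List Bool) : Prop :=
  ∃ A B : List Bool, X = A ++ false :: B ∧ Y = A ++ B

/-- One elementary step: deletion or insertion of a single `0`. -/
def ZeroStep (X Y : List Bool) : Prop := ZeroDel X Y ∨ ZeroDel Y X

/-- `ZeroChain k X Y` : `Y` is obtained from `X` by exactly `k` elementary steps. -/
def ZeroChain : ℕ → List Bool → List Bool → Prop
  | 0, X, Y => X = Y
  | k + 1, X, Y => ∃ Z, ZeroStep X Z ∧ ZeroChain k Z Y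

/-- The deletion/insertion-of-`0`'s distance `d_id`, valued in `ℕ∞`
(`⊤` when no finite sequence of steps transforms `X` into `Y`). -/
noncomputable def dId (X Y : List Bool) : ℕ∞ :=
  sInf {n : ℕ∞ | ∃ k : ℕ, n = k ∧ ZeroChain k X Y}

/-- `Y` is obtained from `X` by `0`-deletions only (possibly none). -/
def ZeroDelsOnly (X Y : List Bool) : Prop := Relation.ReflTransGen ZeroDel X Y

/-- `Y` is obtained from `X` by `0`-insertions only (possibly none). -/
def ZeroInsOnly (X Y : List Bool) : Prop := Relation.ReflTransGen ZeroDel Y X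

theorem ZeroStep.symm {X Y : List Bool} (h : ZeroStep X Y) : ZeroStep Y X := Or.symm h

theorem ZeroDel.length_eq {X Y : List Bool} (h : ZeroDel X Y) : X.length = Y.length + 1 := by
  obtain ⟨A, B, rfl, rfl⟩ := h
  simp
  omega

theorem ZeroChain.trans {k l : ℕ} {X Y Z : List Bool} (h : ZeroChain k X Y)
    (h' : ZeroChain l Y Z) : ZeroChain (k + l) X Z := by
  induction k generalizing X with
  | zero => cases h; simpa using h'
  | succ k ih =>
    obtain ⟨W, hW, hc⟩ := h
    rw [Nat.add_right_comm]
    exact ⟨W, hW, ih hc⟩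

theorem ZeroStep.chain {X Y : List Bool} (h : ZeroStep X Y) : ZeroChain 1 X Y := ⟨Y, h, rfl⟩

theorem ZeroChain.symm {k : ℕ} {X Y : List Bool} (h : ZeroChain k X Y) : ZeroChain k Y X := by
  induction k generalizing X with
  | zero => exact Eq.symm h
  | succ k ih =>
    obtain ⟨W, hW, hc⟩ := h
    exact (ih hc).trans hW.symm.chain

theorem ZeroChain.length_le {k : ℕ} {X Y : List Bool} (h : ZeroChain k X Y) :
    X.length ≤ Y.length + k ∧ Y.length ≤ X.length + k := by
  induction k generalizing X with
  | zero => cases h; simp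
  | succ k ih =>
    obtain ⟨W, hW, hc⟩ := h
    have := ih hc
    rcases hW with hW | hW <;> have := hW.length_eq <;> omega

theorem ZeroDelsOnly.exists_chain {X Y : List Bool} (h : ZeroDelsOnly X Y) :
    ∃ k : ℕ, X.length = Y.length + k ∧ ZeroChain k X Y := by
  unfold ZeroDelsOnly at h
  induction h with
  | refl => exact ⟨0, rfl, rfl⟩
  | tail _ hs ih =>
    obtain ⟨k, hk, hc⟩ := ih
    have := hs.length_eq
    exact ⟨k + 1, by omega, hc.trans (ZeroStep.chain (Or.inl hs))⟩

theorem dId_le_iff {X Y : List Bool} {m : ℕ} :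
    dId X Y ≤ (m : ℕ∞) ↔ ∃ k ≤ m, ZeroChain k X Y := by
  constructor
  · intro h
    have hlt : dId X Y < ((m + 1 : ℕ) : ℕ∞) := lt_of_le_of_lt h (by exact_mod_cast m.lt_succ_self)
    obtain ⟨_, ⟨k, rfl, hc⟩, hk⟩ := sInf_lt_iff.mp hlt
    exact ⟨k, Nat.lt_succ_iff.mp (by exact_mod_cast hk), hc⟩
  · rintro ⟨k, hk, hc⟩
    have h : dId X Y ≤ (k : ℕ∞) := sInf_le ⟨k, rfl, hc⟩
    exact h.trans (by exact_mod_cast hk)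

/-- Every code `C ⊆ {0,1}ⁿ` with minimum `d_id`-distance `≥ 2t + 2` is a
`t`-Sy0EC/`(t+1)`-Sy0ED/AU0ED code: there is a decoder `Dec` such that for every
sent `X ∈ C` and received word `Y`:
(C1) if `Y` arises from `X` by `0`-deletions only and `Dec Y = (X', true)` then `X' = X`;
(C2) if `Y` arises from `X` by `0`-insertions only and `Dec Y = (X', true)` then `X' = X`;
(C3) if `d_id(X,Y) ≤ t + 1` and `Dec Y = (X', true)` then `X' = X`;
(C4) if `d_id(X,Y) ≤ t` then the second component of `Dec Y` is `true`. -/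
theorem exists_tSy0EC_decoder (n t : ℕ) (C : Set (List Bool))
    (hlen : ∀ X ∈ C, X.length = n)
    (hd : ∀ X ∈ C, ∀ Y ∈ C, X ≠ Y → ((2 * t + 2 : ℕ) : ℕ∞) ≤ dId X Y) :
    ∃ Dec : List Bool → List Bool × Bool,
      ∀ X ∈ C, ∀ Y : List Bool,
        (ZeroDelsOnly X Y → ∀ X', Dec Y = (X', true) → X' = X) ∧
        (ZeroInsOnly X Y → ∀ X', Dec Y = (X', true) → X' = X) ∧
        (dId X Y ≤ ((t + 1 : ℕ) : ℕ∞) → ∀ X', Dec Y = (X', true) → X' = X) ∧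
        (dId X Y ≤ ((t : ℕ) : ℕ∞) → (Dec Y).2 = true) := by
  classical
  let Dec : List Bool → List Bool × Bool := fun Y =>
    if h : ∃ X ∈ C, dId X Y ≤ (t : ℕ∞) then (h.choose, true) else ([], false)
  have hDec : ∀ Y X', Dec Y = (X', true) → X' ∈ C ∧ ∃ k ≤ t, ZeroChain k X' Y := by
    intro Y X' h
    by_cases hY : ∃ X ∈ C, dId X Y ≤ (t : ℕ∞)
    · simp only [Dec, dif_pos hY, Prod.mk.injEq, and_true] at h
      subst h
      exact ⟨hY.choose_spec.1, dId_le_iff.mp hY.choose_spec.2⟩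
    · simp [Dec, dif_neg hY] at h
  -- Triangle inequality: the decoded word is the sent one within distance `t + 1`.
  have key : ∀ X ∈ C, ∀ Y X', Dec Y = (X', true) → ∀ k ≤ t + 1, ZeroChain k X Y → X' = X := by
    intro X hX Y X' h k hk hc
    obtain ⟨hX', l, hl, hc'⟩ := hDec Y X' h
    by_contra hne
    have h1 := hd X hX X' hX' (Ne.symm hne)
    have h2 : dId X X' ≤ ((2 * t + 1 : ℕ) : ℕ∞) :=
      dId_le_iff.mpr ⟨k + l, by omega, hc.trans hc'.symm⟩
    have h3 : 2 * t + 2 ≤ 2 * t + 1 := by exact_mod_cast h1.trans h2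
    omega
  refine ⟨Dec, fun X hX Y => ⟨?_, ?_, ?_, ?_⟩⟩
  · intro h X' hX'
    obtain ⟨k, hk, hc⟩ := h.exists_chain
    obtain ⟨hC, l, hl, hc'⟩ := hDec Y X' hX'
    have := hc'.length_le
    have := hlen X hX
    have := hlen X' hC
    exact key X hX Y X' hX' k (by omega) hc
  · intro h X' hX'
    obtain ⟨k, hk, hc⟩ := ZeroDelsOnly.exists_chain h
    obtain ⟨hC, l, hl, hc'⟩ := hDec Y X' hX'
    have := hc'.length_le
    have := hlen X hX
    have := hlen X' hC
    exact key X hX Y X' hX' k (by omega) hc.symm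
  · intro h X' hX'
    obtain ⟨k, hk, hc⟩ := dId_le_iff.mp h
    exact key X hX Y X' hX' k hk hc
  · intro h
    have hY : ∃ X ∈ C, dId X Y ≤ (t : ℕ∞) := ⟨X, hX, h⟩
    simp only [Dec, dif_pos hY]
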